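/- (Complementation of Alternating Parity Tree Automata) Let A be a parity automaton over Σ with coloring c. Define the parity automaton ¬A over Σ with the same states and initial state as A, transitions δ_{¬A} (q, a) = { C̄ : Set (D × Q) | C̄ is nonempty and C̄ ∩ C is nonempty for every C ∈ δ_A (q, a) }, and coloring q ↦ c q + 1. Then for every tree F : List D → Σ: F ∈ L(¬A) if and only if F ∉ L(A). -/

import Mathlib

namespace TreeGames

variable {D P O : Type*}

/-- Strict prefix order on tree positions `x < y`. -/
def TLt (x y : List D) : Prop := x <+: y ∧ x ≠ y

/-- The relation `u ⊏ v` on game positions. -/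
def Glt (u v : List D × (P ⊕ O)) : Prop :=
  TLt u.1 v.1 ∨ (u.1 = v.1 ∧ (∃ k, u.2 = Sum.inl k) ∧ (∃ l, v.2 = Sum.inr l))

/-- The relation `u ⊑ v` on game positions. -/
def Gle (u v : List D × (P ⊕ O)) : Prop := Glt u v ∨ u = v

/-- `v` is an immediate successor of `u`. -/
def Gsucc (u v : List D × (P ⊕ O)) : Prop :=
  Glt u v ∧ ¬ ∃ w : List D × (P ⊕ O), Glt u w ∧ Glt w v

/-- The edge relation of the game given by `eP`, `eO`. -/
def Edge (eP : List D × P → Set O) (eO : List D × O → Set (D × P))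
    (u v : List D × (P ⊕ O)) : Prop :=
  (∃ x k l, u = (x, Sum.inl k) ∧ v = (x, Sum.inr l) ∧ l ∈ eP (x, k)) ∨
  (∃ x l d k, u = (x, Sum.inr l) ∧ v = (x ++ [d], Sum.inl k) ∧ (d, k) ∈ eO (x, l))

/-- `U` is an infinite play of the game with edge relation `r` from `u₀`. -/
def IsPlay {α : Type*} (r : α → α → Prop) (u₀ : α) (U : Set α) : Prop :=
  u₀ ∈ U ∧ (∀ v ∈ U, Relation.ReflTransGen r u₀ v) ∧
  (∀ v ∈ U, ∃ w ∈ U, r v w) ∧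
  (∀ v ∈ U, ∀ w ∈ U, Relation.TransGen r v w ∨ v = w ∨ Relation.TransGen r w v)

/-- Proponent edge function of the acceptance game `G(A,F)`:
`eP (x, q) = {(q, C) | C ∈ δ (q, F x)}`. -/
def AccEP {Q A : Type*} (δ : Q × A → Set (Set (D × Q))) (F : List D → A) :
    List D × Q → Set (Q × Set (D × Q)) :=
  fun p => {w : Q × Set (D × Q) | w.1 = p.2 ∧ w.2 ∈ δ (p.2, F p.1)}

/-- Opponent edge function of the acceptance game: `eO (x, (q, C)) = C`. -/
def AccEO {Q : Type*} : List D × (Q × Set (D × Q)) → Set (D × Q) := fun p => p.2.2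

/-- Extension of a coloring of states to game positions. -/
def HatC {Q : Type*} (c : Q → ℕ) : List D × (Q ⊕ Q × Set (D × Q)) → ℕ :=
  fun u => Sum.elim c (fun w => c w.1) u.2

/-- The parity condition on a set `U` of positions of an acceptance game. -/
def Par {Q : Type*} (c : Q → ℕ) (U : Set (List D × (Q ⊕ Q × Set (D × Q)))) : Prop :=
  ∃ m : ℕ, Even m ∧ (∀ u ∈ U, ∃ v ∈ U, Glt u v ∧ HatC c v = m) ∧
    (∃ u ∈ U, ∀ v ∈ U, Glt u v → m ≤ HatC c v)

/-- The parity automaton with transitions `δ`, coloring `c` and initial state `q₀`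
accepts the input tree `F` : there is a Proponent strategy in the acceptance game
winning from the root for the parity condition. -/
def Accepts {Q A : Type*} (δ : Q × A → Set (Set (D × Q))) (c : Q → ℕ) (q₀ : Q)
    (F : List D → A) : Prop :=
  ∃ σ : List D × Q → Q × Set (D × Q),
    (∀ p, σ p ∈ AccEP δ F p) ∧
    ∀ U : Set (List D × (Q ⊕ Q × Set (D × Q))),
      IsPlay (Edge (fun p => ({σ p} : Set (Q × Set (D × Q)))) AccEO)
        ((([] : List D), Sum.inl q₀)) U → Par c U

/-- Well-formedness of an automaton transition function: each `δ (q, a)` is a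
nonempty set of nonempty conjunctions. -/
def AutWF {Q A : Type*} (δ : Q × A → Set (Set (D × Q))) : Prop :=
  ∀ q a, (δ (q, a)).Nonempty ∧ ∀ C ∈ δ (q, a), C.Nonempty

/-- The automaton is nondeterministic: within any conjunction, each direction
determines at most one state. -/
def NonDet {Q A : Type*} (δ : Q × A → Set (Set (D × Q))) : Prop :=
  ∀ q a, ∀ C ∈ δ (q, a), ∀ d : D, ∀ q₁ q₂ : Q, (d, q₁) ∈ C → (d, q₂) ∈ C → q₁ = q₂

/-!
Contracting each round of the acceptance game into a single step yields a game on pairs of a node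
and a state in which Proponent moves by choosing a conjunction. The contracted game of `¬A` is
that of `A` with the players exchanged, so the theorem says that parity games are positionally
determined.

The set of positions won by a player is a nested fixpoint of the controllable predecessor operator,
alternating greatest fixpoints for the good colors with least ones for the bad colors. Complementing
it exchanges the two kinds of fixpoints and replaces the operator by that of the other player, so
every position lies in the fixpoint of one of the players. A positional winning strategy is read
off the fixpoint by induction on the number of colors: under a greatest fixpoint, a good color may
recur forever, and under a least one, each visit to the bad color lowers an ordinal rank. Finally,
two strategies of opposing players share a play, so they cannot both win.
-/

section LiminfSatisfies

open Filter

/-- The parity condition on a sequence of colors: some color is the least one that occurs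
infinitely often, and it satisfies `p`. It fails for a sequence that tends to infinity. -/
def LiminfSatisfies (p : ℕ → Prop) (a : ℕ → ℕ) : Prop :=
  ∃ m, p m ∧ (∃ᶠ n in atTop, a n = m) ∧ ∀ᶠ n in atTop, m ≤ a n

variable {p : ℕ → Prop} {a : ℕ → ℕ}

theorem liminfSatisfies_comp_iff {g : ℕ → ℕ} (hg : map g atTop = atTop) :
    LiminfSatisfies p (a ∘ g) ↔ LiminfSatisfies p a := by
  conv_rhs => rw [LiminfSatisfies, ← hg]
  rfl

theorem liminfSatisfies_add_one_iff :
    LiminfSatisfies p (fun n => a n + 1) ↔ LiminfSatisfies (fun m => p (m + 1)) a := by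
  constructor
  · rintro ⟨m, hm, hfreq, hev⟩
    obtain ⟨n, rfl⟩ := hfreq.exists
    exact ⟨a n, hm, by simpa using hfreq, by simpa using hev⟩
  · rintro ⟨m, hm, hfreq, hev⟩
    exact ⟨m + 1, hm, by simpa using hfreq, by simpa using hev⟩

theorem LiminfSatisfies.not_liminfSatisfies_not (h : LiminfSatisfies p a) :
    ¬ LiminfSatisfies (fun m => ¬ p m) a := by
  obtain ⟨m, hm, hfreq, hev⟩ := h
  rintro ⟨m', hm', hfreq', hev'⟩
  obtain ⟨n, han, hn⟩ := (hfreq.and_eventually hev').exists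
  obtain ⟨n', han', hn'⟩ := (hfreq'.and_eventually hev).exists
  obtain rfl : m = m' := by omega
  exact hm' hm

end LiminfSatisfies

section Fixpoints

universe u

theorem compl_gfp_eq_lfp {α : Type*} [CompleteBooleanAlgebra α] {f g : α →o α}
    (h : ∀ x, (f x)ᶜ = g xᶜ) : f.gfpᶜ = g.lfp := by
  apply le_antisymm
  · have le_map : g.lfpᶜ ≤ f g.lfpᶜ := by
      rw [← compl_le_compl_iff_le, h, compl_compl, g.map_lfp]
    exact compl_le_iff_compl_le.mp (f.le_gfp le_map)
  · exact g.lfp_le (by rw [← h, f.map_gfp])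

theorem compl_lfp_eq_gfp {α : Type*} [CompleteBooleanAlgebra α] {f g : α →o α}
    (h : ∀ x, (f x)ᶜ = g xᶜ) : f.lfpᶜ = g.gfp := by
  have h' : ∀ x, (g x)ᶜ = f xᶜ := fun x => by rw [← compl_compl (f xᶜ), h, compl_compl]
  rw [← compl_gfp_eq_lfp h', compl_compl]

theorem exists_rank_lfp {V : Type u} (f : Set V →o Set V) :
    ∃ r : V → Ordinal.{u}, ∀ b, f {v ∈ f.lfp | r v < b} = {v ∈ f.lfp | r v ≤ b} := by
  let X : Ordinal.{u} → Set V := OrdinalApprox.lfpApprox f ⊥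
  let r : V → Ordinal.{u} := fun v => sInf {b | v ∈ f (X b)}
  have mem_X_iff_exists (b v) : v ∈ X b ↔ ∃ a < b, v ∈ f (X a) := by
    simp only [X]
    rw [OrdinalApprox.lfpApprox]
    simp
  have apply_X_subset (b) : f (X b) ⊆ f.lfp :=
    f.map_le_lfp (OrdinalApprox.lfpApprox_le_of_mem_fixedPoints f f.map_lfp bot_le b)
  have rank_le {v b} (hv : v ∈ f (X b)) : r v ≤ b := csInf_le' hv
  have mem_apply_rank {v} (hv : v ∈ f.lfp) : v ∈ f (X (r v)) := by
    obtain ⟨b, hb⟩ := OrdinalApprox.lfp_mem_range_lfpApprox f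
    obtain ⟨a, -, ha⟩ := (mem_X_iff_exists b v).mp (hb.ge hv)
    exact csInf_mem (s := {b | v ∈ f (X b)}) ⟨a, ha⟩
  have X_eq (b) : X b = {v ∈ f.lfp | r v < b} := by
    ext v
    rw [mem_X_iff_exists]
    exact ⟨fun ⟨a, hab, ha⟩ => ⟨apply_X_subset a ha, (rank_le ha).trans_lt hab⟩,
      fun ⟨hv, hvb⟩ => ⟨r v, hvb, mem_apply_rank hv⟩⟩
  refine ⟨r, fun b => ?_⟩
  rw [← X_eq]
  ext v
  exact ⟨fun hv => ⟨apply_X_subset b hv, rank_le hv⟩, fun ⟨hv, hvb⟩ =>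
    f.mono (OrdinalApprox.lfpApprox_mono_right f hvb) (mem_apply_rank hv)⟩

variable {V : Type*} (Φ Ψ : Set V →o Set V) (c : V → ℕ) (p : ℕ → Prop)

/-- `(Y, X) ↦ Y` with its part of color `i` replaced by that of `Φ X`. -/
def replaceColor (i : ℕ) : Set V × Set V →o Set V where
  toFun YX := (c ⁻¹' {i}).ite (Φ YX.2) YX.1
  monotone' _ _ h := Set.ite_mono _ (Φ.mono h.2) h.1

open Classical in
/-- The nested fixpoint of Emerson and Jutla for the `k` colors `i, ..., i + k - 1`, the smallest
color outermost: a greatest fixpoint for a color satisfying `p`, a least one otherwise. For `Φ` the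
controllable predecessor operator of a game, it is the set of positions from which a player can
force either the parity condition `p` or a visit to a point of `Y` with another color. -/
noncomputable def parityFixpoint : ℕ → ℕ → Set V →o Set V
  | 0, _ => OrderHom.id
  | k + 1, i => (if p i then OrderHom.gfp else OrderHom.lfp).comp
      (OrderHom.curry ((parityFixpoint k (i + 1)).comp (replaceColor Φ c i)))

/-- The map whose greatest or least fixpoint is `parityFixpoint Φ c p (k + 1) i Y`. -/
noncomputable def parityBody (k i : ℕ) (Y : Set V) : Set V →o Set V :=
  OrderHom.curry ((parityFixpoint Φ c p k (i + 1)).comp (replaceColor Φ c i)) Y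

variable {Φ Ψ c p} {k i : ℕ} {Y : Set V}

theorem parityFixpoint_succ_of_pos (hi : p i) :
    parityFixpoint Φ c p (k + 1) i Y = (parityBody Φ c p k i Y).gfp := by
  simp only [parityFixpoint, if_pos hi]
  rfl

theorem parityFixpoint_succ_of_neg (hi : ¬ p i) :
    parityFixpoint Φ c p (k + 1) i Y = (parityBody Φ c p k i Y).lfp := by
  simp only [parityFixpoint, if_neg hi]
  rfl

theorem parityBody_parityFixpoint :
    parityBody Φ c p k i Y (parityFixpoint Φ c p (k + 1) i Y) =
      parityFixpoint Φ c p (k + 1) i Y := by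
  by_cases hi : p i
  · rw [parityFixpoint_succ_of_pos hi, OrderHom.map_gfp]
  · rw [parityFixpoint_succ_of_neg hi, OrderHom.map_lfp]

theorem mem_of_mem_parityFixpoint_of_lt {v : V} (hv : v ∈ parityFixpoint Φ c p k i Y)
    (hvi : c v < i) : v ∈ Y := by
  induction k generalizing i Y with
  | zero => exact hv
  | succ k ih =>
    rw [← parityBody_parityFixpoint] at hv
    rcases ih hv (Nat.lt_succ_of_lt hvi) with ⟨-, hi⟩ | ⟨hY, -⟩
    · exact absurd hi hvi.ne
    · exact hY

theorem compl_replaceColor (hΦΨ : ∀ X, (Φ X)ᶜ = Ψ Xᶜ) (X : Set V) :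
    (replaceColor Φ c i (Y, X))ᶜ = replaceColor Ψ c i (Yᶜ, Xᶜ) := by
  ext v
  by_cases hv : c v = i <;> simp [replaceColor, Set.ite, ← hΦΨ, hv]

theorem compl_parityFixpoint (hΦΨ : ∀ X, (Φ X)ᶜ = Ψ Xᶜ) :
    (parityFixpoint Φ c p k i Y)ᶜ = parityFixpoint Ψ c (fun m => ¬ p m) k i Yᶜ := by
  induction k generalizing i Y with
  | zero => rfl
  | succ k ih =>
    have compl_body (X) : (parityBody Φ c p k i Y X)ᶜ =
        parityBody Ψ c (fun m => ¬ p m) k i Yᶜ Xᶜ :=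
      ih.trans (congrArg _ (compl_replaceColor hΦΨ X))
    by_cases hi : p i
    · rw [parityFixpoint_succ_of_pos hi, parityFixpoint_succ_of_neg (not_not.mpr hi)]
      exact compl_gfp_eq_lfp compl_body
    · rw [parityFixpoint_succ_of_neg hi, parityFixpoint_succ_of_pos hi]
      exact compl_lfp_eq_gfp compl_body

end Fixpoints

/-- A two-player game on positions `V`: at `v` the player chooses a set of actions in `moves v`,
the adversary chooses an action `a` in that set, and the game continues at `succ v a`. -/
structure Arena (V A : Type*) where
  moves : V → Set (Set A)
  succ : V → A → V

namespace Arena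

variable {V A : Type*} (G : Arena V A) (c : V → ℕ) (p : ℕ → Prop)

/-- The game with the roles of player and adversary exchanged: a move of the new player is a set
meeting every move of the old one. -/
def dual : Arena V A where
  moves v := {T | ∀ S ∈ G.moves v, (T ∩ S).Nonempty}
  succ := G.succ

/-- The controllable predecessors of `X`: the positions from which the player can force the next
position into `X`. -/
def cpre : Set V →o Set V where
  toFun X := {v | ∃ S ∈ G.moves v, ∀ a ∈ S, G.succ v a ∈ X}
  monotone' _ _ h _ := fun ⟨S, hS, hX⟩ => ⟨S, hS, fun a ha => h (hX a ha)⟩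

/-- `s` is an infinite play in which the player uses the positional strategy `τ`. -/
def Follows (τ : V → Set A) (s : ℕ → V) : Prop :=
  ∀ n, ∃ a ∈ τ (s n), s (n + 1) = G.succ (s n) a

/-- The player has a positional strategy all of whose plays from `v₀` satisfy the parity
condition `p` for the coloring `c`. -/
def Wins (v₀ : V) : Prop :=
  ∃ τ : V → Set A, (∀ v, τ v ∈ G.moves v) ∧
    ∀ s : ℕ → V, s 0 = v₀ → G.Follows τ s → LiminfSatisfies p (c ∘ s)

/-- From `W`, the strategy `τ` forces the parity condition `p` unless `Y` is visited, and
never leaves `W` before visiting `Y`. -/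
structure IsWinningUntil (Y W : Set V) (τ : V → Set A) : Prop where
  mem_moves : ∀ v ∈ W \ Y, τ v ∈ G.moves v
  succ_mem : ∀ v ∈ W \ Y, ∀ a ∈ τ v, G.succ v a ∈ W
  liminfSatisfies : ∀ s : ℕ → V, (∀ n, s n ∈ W \ Y) → G.Follows τ s → LiminfSatisfies p (c ∘ s)

variable {G c p} {W Y Z X : Set V} {τ : V → Set A} {s : ℕ → V}

theorem compl_cpre (X : Set V) : (G.cpre X)ᶜ = G.dual.cpre Xᶜ := by
  ext v
  constructor
  · intro hv
    refine ⟨{a | G.succ v a ∈ Xᶜ}, fun S hS => ?_, fun a ha => ha⟩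
    by_contra hne
    exact hv ⟨S, hS, fun a ha => by_contra fun haX => hne ⟨a, haX, ha⟩⟩
  · rintro ⟨T, hT, hTX⟩ ⟨S, hS, hSX⟩
    obtain ⟨a, haT, haS⟩ := hT S hS
    exact hTX a haT (hSX a haS)

theorem Follows.shift (hs : G.Follows τ s) (N : ℕ) : G.Follows τ fun n => s (n + N) :=
  fun n => by simpa only [Nat.add_right_comm] using hs (n + N)

theorem Follows.congr {τ' : V → Set A} (hs : G.Follows τ s) (h : ∀ n, τ (s n) = τ' (s n)) :
    G.Follows τ' s :=
  fun n => h n ▸ hs n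

theorem Follows.mem_of_mapsTo (hs : G.Follows τ s) (h₀ : s 0 ∈ W)
    (hW : ∀ v ∈ W, ∀ a ∈ τ v, G.succ v a ∈ W) (n : ℕ) : s n ∈ W := by
  induction n with
  | zero => exact h₀
  | succ n ih =>
    obtain ⟨a, ha, hsucc⟩ := hs n
    exact hsucc ▸ hW _ ih a ha

theorem liminfSatisfies_of_shift (N : ℕ) (h : LiminfSatisfies p (c ∘ fun n => s (n + N))) :
    LiminfSatisfies p (c ∘ s) :=
  (liminfSatisfies_comp_iff (Filter.map_add_atTop_eq_nat N)).mp h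

namespace IsWinningUntil

theorem mono {Y' : Set V} (h : G.IsWinningUntil c p Y W τ) (hY : Y ⊆ Y') :
    G.IsWinningUntil c p Y' W τ where
  mem_moves v hv := h.mem_moves v (Set.sdiff_subset_sdiff_right hY hv)
  succ_mem v hv := h.succ_mem v (Set.sdiff_subset_sdiff_right hY hv)
  liminfSatisfies s hs := h.liminfSatisfies s fun n => Set.sdiff_subset_sdiff_right hY (hs n)

theorem of_subset (h : W ⊆ Y) : G.IsWinningUntil c p Y W τ where
  mem_moves _ hv := absurd (h hv.1) hv.2
  succ_mem _ hv := absurd (h hv.1) hv.2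
  liminfSatisfies _ hs := absurd (h (hs 0).1) (hs 0).2

theorem congr {τ' : V → Set A} (h : G.IsWinningUntil c p Y W τ) (hτ : ∀ v ∈ W \ Y, τ v = τ' v) :
    G.IsWinningUntil c p Y W τ' where
  mem_moves v hv := hτ v hv ▸ h.mem_moves v hv
  succ_mem v hv := hτ v hv ▸ h.succ_mem v hv
  liminfSatisfies s hs hfol :=
    h.liminfSatisfies s hs (hfol.congr fun n => (hτ _ (hs n)).symm)

theorem exists_extension (h : G.IsWinningUntil c p Y W τ) (hZY : Z ⊆ Y) (hZX : Z ⊆ G.cpre X) :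
    ∃ τ' : V → Set A, G.IsWinningUntil c p Y W τ' ∧
      ∀ v ∈ Z, τ' v ∈ G.moves v ∧ ∀ a ∈ τ' v, G.succ v a ∈ X := by
  classical
  choose! force hforce using hZX
  refine ⟨Z.piecewise force τ, h.congr fun v hv => ?_, fun v hv => ?_⟩
  · exact (Z.piecewise_eq_of_notMem _ _ fun hvZ => hv.2 (hZY hvZ)).symm
  · rw [Z.piecewise_eq_of_mem _ _ hv]
    exact hforce hv

theorem liminfSatisfies_of_eventually_notMem (h : G.IsWinningUntil c p (Y ∪ Z) W τ)
    (hs : ∀ n, s n ∈ W \ Y) (hfol : G.Follows τ s) (hZ : ∀ᶠ n in Filter.atTop, s n ∉ Z) :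
    LiminfSatisfies p (c ∘ s) := by
  obtain ⟨N, hN⟩ := Filter.eventually_atTop.mp hZ
  refine liminfSatisfies_of_shift N (h.liminfSatisfies _ (fun n => ⟨(hs _).1, ?_⟩) (hfol.shift N))
  exact not_or.mpr ⟨(hs _).2, hN _ (N.le_add_left n)⟩

/-- A play that visits `Z` only finitely often is eventually played by `τ`; otherwise its least
recurrent color is that of `Z`. -/
theorem exists_of_recurrence {i : ℕ} (hi : p i) (h : G.IsWinningUntil c p (Y ∪ Z) W τ)
    (hZW : Z ⊆ G.cpre W) (hZi : ∀ v ∈ Z, c v = i) (hWi : ∀ v ∈ W \ Y, i ≤ c v) :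
    ∃ τ' : V → Set A, G.IsWinningUntil c p Y W τ' := by
  obtain ⟨τ', hτ', hZ⟩ := h.exists_extension Set.subset_union_right hZW
  refine ⟨τ', fun v hv => ?_, fun v hv => ?_, fun s hs hfol => ?_⟩
  · by_cases hvZ : v ∈ Z
    · exact (hZ v hvZ).1
    · exact hτ'.mem_moves v ⟨hv.1, not_or.mpr ⟨hv.2, hvZ⟩⟩
  · by_cases hvZ : v ∈ Z
    · exact (hZ v hvZ).2
    · exact hτ'.succ_mem v ⟨hv.1, not_or.mpr ⟨hv.2, hvZ⟩⟩
  · by_cases hfreq : ∃ᶠ n in Filter.atTop, s n ∈ Z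
    · exact ⟨i, hi, hfreq.mono fun n hn => hZi _ hn, .of_forall fun n => hWi _ (hs n)⟩
    · exact hτ'.liminfSatisfies_of_eventually_notMem hs hfol (Filter.not_frequently.mp hfreq)

end IsWinningUntil

/-- Ranks never increase along a play and drop at every visit to `Z`, so the play eventually follows
a single `σ b`. -/
theorem isWinningUntil_of_rank {ι : Type*} [PartialOrder ι] [WellFoundedLT ι] (r : V → ι)
    (Z : ι → Set V) (σ : ι → V → Set A)
    (hσ : ∀ b, G.IsWinningUntil c p (Y ∪ Z b) {v ∈ W | r v ≤ b} (σ b))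
    (hZ : ∀ b, ∀ v ∈ Z b, σ b v ∈ G.moves v ∧ ∀ a ∈ σ b v, G.succ v a ∈ {u ∈ W | r u < b}) :
    G.IsWinningUntil c p Y W fun v => σ (r v) v := by
  have notMem_exit {v} (hv : v ∈ W \ Y) (hvZ : v ∉ Z (r v)) :
      v ∈ {u ∈ W | r u ≤ r v} \ (Y ∪ Z (r v)) :=
    ⟨⟨hv.1, le_rfl⟩, not_or.mpr ⟨hv.2, hvZ⟩⟩
  have succ_mem_rank_le {v} (hv : v ∈ W \ Y) {a} (ha : a ∈ σ (r v) v) :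
      G.succ v a ∈ {u ∈ W | r u ≤ r v} := by
    by_cases hvZ : v ∈ Z (r v)
    · exact ⟨((hZ _ v hvZ).2 a ha).1, ((hZ _ v hvZ).2 a ha).2.le⟩
    · exact (hσ (r v)).succ_mem v (notMem_exit hv hvZ) a ha
  refine ⟨fun v hv => ?_, fun v hv a ha => (succ_mem_rank_le hv ha).1, fun s hs hfol => ?_⟩
  · by_cases hvZ : v ∈ Z (r v)
    · exact (hZ _ v hvZ).1
    · exact (hσ _).mem_moves v (notMem_exit hv hvZ)
  · have rank_antitone : Antitone fun n => r (s n) := antitone_nat_of_succ_le fun n => by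
      obtain ⟨a, ha, hsucc⟩ := hfol n
      exact hsucc ▸ (succ_mem_rank_le (hs n) ha).2
    obtain ⟨N, hN⟩ := WellFoundedLT.antitone_chain_condition rank_antitone
    have rank_eq (n) : r (s (n + N)) = r (s N) := (hN _ (N.le_add_left n)).symm
    have notMem_Z (n) : s (n + N) ∉ Z (r (s (n + N))) := fun hmem => by
      obtain ⟨a, ha, hsucc⟩ := hfol.shift N n
      have rank_lt := ((hZ _ _ hmem).2 a ha).2
      rw [← hsucc, rank_eq, rank_eq] at rank_lt
      exact rank_lt.false
    refine liminfSatisfies_of_shift N ((hσ (r (s N))).liminfSatisfies _ (fun n => ?_) ?_)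
    · exact rank_eq n ▸ notMem_exit (hs _) (notMem_Z n)
    · exact (hfol.shift N).congr fun n => by rw [rank_eq]

theorem exists_isWinningUntil_lfp (f : Set V →o Set V) (Z : Set V → Set V)
    (hZ : ∀ X, Z X ⊆ G.cpre X) (h : ∀ X, ∃ τ, G.IsWinningUntil c p (Y ∪ Z X) (f X) τ) :
    ∃ τ, G.IsWinningUntil c p Y f.lfp τ := by
  obtain ⟨r, hr⟩ := exists_rank_lfp f
  choose τ hτ using h
  choose σ hσ hσZ using fun X => (hτ X).exists_extension Set.subset_union_right (hZ X)
  exact ⟨_, isWinningUntil_of_rank r (fun b => Z {v ∈ f.lfp | r v < b})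
    (fun b => σ {v ∈ f.lfp | r v < b}) (fun b => hr b ▸ hσ _) fun b => hσZ _⟩

theorem exists_isWinningUntil_parityFixpoint (k i : ℕ) (Y : Set V) :
    ∃ τ, G.IsWinningUntil c p (Y \ c ⁻¹' Set.Ico i (i + k))
      (parityFixpoint G.cpre c p k i Y) τ := by
  induction k generalizing i Y with
  | zero => exact ⟨fun _ => ∅, .of_subset fun v hv => ⟨hv, by simp⟩⟩
  | succ k ih =>
    let Z (X : Set V) : Set V := c ⁻¹' {i} ∩ G.cpre X
    have exits_subset (X) : replaceColor G.cpre c i (Y, X) \ c ⁻¹' Set.Ico (i + 1) (i + 1 + k) ⊆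
        Y \ c ⁻¹' Set.Ico i (i + (k + 1)) ∪ Z X := by
      rintro v ⟨⟨hX, hi⟩ | ⟨hY, hi⟩, hv⟩
      · exact .inr ⟨hi, hX⟩
      · refine .inl ⟨hY, fun hv' => hv ?_⟩
        simp only [Set.mem_preimage, Set.mem_singleton_iff, Set.mem_Ico] at hi hv' ⊢
        omega
    have body_winning (X) : ∃ τ, G.IsWinningUntil c p (Y \ c ⁻¹' Set.Ico i (i + (k + 1)) ∪ Z X)
        (parityBody G.cpre c p k i Y X) τ :=
      (ih (i + 1) _).imp fun τ hτ => hτ.mono (exits_subset X)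
    by_cases hi : p i
    · obtain ⟨τ, hτ⟩ := body_winning (parityFixpoint G.cpre c p (k + 1) i Y)
      rw [parityBody_parityFixpoint] at hτ
      refine hτ.exists_of_recurrence hi Set.inter_subset_right (fun v hv => hv.1) fun v hv => ?_
      by_contra! hvi
      exact hv.2 ⟨mem_of_mem_parityFixpoint_of_lt hv.1 hvi, fun hv' => hvi.not_ge hv'.1⟩
    · rw [parityFixpoint_succ_of_neg hi]
      exact exists_isWinningUntil_lfp _ Z (fun X => Set.inter_subset_right) body_winning

theorem wins_of_mem_parityFixpoint (hmoves : ∀ v, (G.moves v).Nonempty) {K : ℕ}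
    (hK : ∀ v, c v < K) {v₀ : V} (hv₀ : v₀ ∈ parityFixpoint G.cpre c p K 0 Y) :
    G.Wins c p v₀ := by
  classical
  choose default hdefault using hmoves
  obtain ⟨τ, hτ⟩ := exists_isWinningUntil_parityFixpoint (G := G) (c := c) (p := p) K 0 Y
  set W := parityFixpoint G.cpre c p K 0 Y
  have no_exits : Y \ c ⁻¹' Set.Ico 0 (0 + K) = ∅ :=
    Set.sdiff_eq_empty.mpr fun v _ => ⟨Nat.zero_le _, by simpa using hK v⟩
  rw [no_exits] at hτ
  replace hτ := hτ.congr (τ' := W.piecewise τ default) fun v hv =>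
    (W.piecewise_eq_of_mem _ _ hv.1).symm
  refine ⟨W.piecewise τ default, fun v => ?_, fun s hs₀ hfol => ?_⟩
  · by_cases hv : v ∈ W
    · exact hτ.mem_moves v ⟨hv, id⟩
    · rw [W.piecewise_eq_of_notMem _ _ hv]
      exact hdefault v
  · have mem_W := hfol.mem_of_mapsTo (hs₀ ▸ hv₀) fun v hv => hτ.succ_mem v ⟨hv, id⟩
    exact hτ.liminfSatisfies s (fun n => ⟨mem_W n, id⟩) hfol

theorem exists_follows_follows (v₀ : V) {τ' : V → Set A} (h : ∀ v, (τ v ∩ τ' v).Nonempty) :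
    ∃ s : ℕ → V, s 0 = v₀ ∧ G.Follows τ s ∧ G.Follows τ' s := by
  choose a haτ haτ' using h
  let s : ℕ → V := fun n => (fun v => G.succ v (a v))^[n] v₀
  have s_succ (n) : s (n + 1) = G.succ (s n) (a (s n)) := Function.iterate_succ_apply' _ _ _
  exact ⟨s, rfl, fun n => ⟨_, haτ _, s_succ n⟩, fun n => ⟨_, haτ' _, s_succ n⟩⟩

theorem Wins.not_wins_dual {v₀ : V} (h : G.Wins c p v₀) :
    ¬ G.dual.Wins c (fun m => ¬ p m) v₀ := by
  obtain ⟨τ, hτ, hwin⟩ := h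
  rintro ⟨τ', hτ', hwin'⟩
  obtain ⟨s, hs₀, hfol', hfol⟩ :=
    G.exists_follows_follows v₀ fun v => hτ' v (τ v) (hτ v)
  exact (hwin s hs₀ hfol).not_liminfSatisfies_not (hwin' s hs₀ hfol')

theorem wins_dual_iff_not_wins (hmoves : ∀ v, (G.moves v).Nonempty)
    (hne : ∀ v, ∀ S ∈ G.moves v, S.Nonempty) (hc : BddAbove (Set.range c)) (v₀ : V) :
    G.dual.Wins c (fun m => ¬ p m) v₀ ↔ ¬ G.Wins c p v₀ := by
  refine ⟨fun h h' => h'.not_wins_dual h, fun h => ?_⟩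
  obtain ⟨K, hK⟩ := hc
  have lt_succ (v) : c v < K + 1 := Nat.lt_succ_of_le (hK ⟨v, rfl⟩)
  have hdual (v) : (G.dual.moves v).Nonempty :=
    ⟨Set.univ, fun S hS => by simpa using hne v S hS⟩
  have hv₀ : v₀ ∈ (parityFixpoint G.cpre c p (K + 1) 0 ∅)ᶜ := fun hv₀ =>
    h (wins_of_mem_parityFixpoint hmoves lt_succ hv₀)
  rw [compl_parityFixpoint compl_cpre] at hv₀
  exact wins_of_mem_parityFixpoint hdual lt_succ hv₀

theorem wins_even_add_one_iff {v₀ : V} :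
    G.Wins (fun v => c v + 1) Even v₀ ↔ G.Wins c (fun m => ¬ Even m) v₀ := by
  simp only [Wins, Function.comp_def, liminfSatisfies_add_one_iff, Nat.even_add_one]

end Arena

section Plays

open Relation

theorem isPlay_range {α : Type*} {r : α → α → Prop} {t : ℕ → α} (h : ∀ n, r (t n) (t (n + 1))) :
    IsPlay r (t 0) (Set.range t) := by
  have transGen_of_lt {i j} (hij : i < j) : TransGen r (t i) (t j) :=
    Nat.rel_of_forall_rel_succ_of_lt (TransGen r) (fun n => .single (h n)) hij
  refine ⟨⟨0, rfl⟩, ?_, ?_, ?_⟩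
  · rintro _ ⟨n, rfl⟩
    exact Nat.rel_of_forall_rel_succ_of_le (ReflTransGen r) (fun n => .single (h n)) n.zero_le
  · rintro _ ⟨n, rfl⟩
    exact ⟨_, ⟨n + 1, rfl⟩, h n⟩
  · rintro _ ⟨i, rfl⟩ _ ⟨j, rfl⟩
    rcases lt_trichotomy i j with hij | rfl | hij
    · exact .inl (transGen_of_lt hij)
    · exact .inr (.inl rfl)
    · exact .inr (.inr (transGen_of_lt hij))

theorem grade_lt_of_transGen {α : Type*} {r : α → α → Prop} {grade : α → ℕ}
    (hgrade : ∀ u v, r u v → grade v = grade u + 1) {u v : α} (h : TransGen r u v) :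
    grade u < grade v := by
  induction h with
  | single h => exact (hgrade _ _ h).symm ▸ Nat.lt_succ_self _
  | tail _ h ih => exact ih.trans ((hgrade _ _ h).symm ▸ Nat.lt_succ_self _)

theorem grade_chain {α : Type*} {r : α → α → Prop} {grade : α → ℕ}
    (hgrade : ∀ u v, r u v → grade v = grade u + 1) {t : ℕ → α} (h : ∀ n, r (t n) (t (n + 1)))
    (n : ℕ) : grade (t n) = grade (t 0) + n := by
  induction n with
  | zero => rfl
  | succ n ih => rw [hgrade _ _ (h n), ih, Nat.add_assoc]

/-- Two comparable positions of the same grade coincide, so any sequence of edges inside `U`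
exhausts `U`. -/
theorem IsPlay.exists_eq_range {α : Type*} {r : α → α → Prop} {grade : α → ℕ}
    (hgrade : ∀ u v, r u v → grade v = grade u + 1) {u₀ : α} {U : Set α} (h : IsPlay r u₀ U) :
    ∃ t : ℕ → α, t 0 = u₀ ∧ (∀ n, r (t n) (t (n + 1))) ∧ U = Set.range t := by
  obtain ⟨hu₀, hreach, hsucc, hcomp⟩ := h
  choose! next next_mem hnext using hsucc
  let t : ℕ → α := fun n => next^[n] u₀
  have t_succ (n) : t (n + 1) = next (t n) := Function.iterate_succ_apply' _ _ _
  have t_mem (n) : t n ∈ U := by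
    induction n with
    | zero => exact hu₀
    | succ n ih => exact t_succ n ▸ next_mem _ ih
  have t_chain (n) : r (t n) (t (n + 1)) := t_succ n ▸ hnext _ (t_mem n)
  refine ⟨t, rfl, t_chain, (Set.range_subset_iff.mpr t_mem).antisymm' fun u hu => ?_⟩
  have grade_le : grade u₀ ≤ grade u := by
    rcases reflTransGen_iff_eq_or_transGen.mp (hreach u hu) with rfl | htrans
    · exact le_rfl
    · exact (grade_lt_of_transGen hgrade htrans).le
  obtain ⟨n, hn⟩ := Nat.exists_eq_add_of_le grade_le
  have grade_eq : grade (t n) = grade u := (grade_chain hgrade t_chain n).trans hn.symm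
  refine ⟨n, ?_⟩
  rcases hcomp _ (t_mem n) u hu with hlt | heq | hgt
  · exact absurd grade_eq (grade_lt_of_transGen hgrade hlt).ne
  · exact heq
  · exact absurd grade_eq (grade_lt_of_transGen hgrade hgt).ne'

end Plays

section GamePositions

/-- The number of moves from the root to a game position; each tree direction accounts for two. -/
def depth (u : List D × (P ⊕ O)) : ℕ := 2 * u.1.length + u.2.elim (fun _ => 0) fun _ => 1

variable {eP : List D × P → Set O} {eO : List D × O → Set (D × P)} {u v w : List D × (P ⊕ O)}
  {t : ℕ → List D × (P ⊕ O)}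

theorem TLt.length_lt {x y : List D} (h : TLt x y) : x.length < y.length :=
  h.1.length_le.lt_of_ne fun hlen => h.2 (h.1.eq_of_length hlen)

theorem TLt.trans {x y z : List D} (hxy : TLt x y) (hyz : TLt y z) : TLt x z :=
  ⟨hxy.1.trans hyz.1, fun h => (hxy.length_lt.trans hyz.length_lt).ne (congrArg _ h)⟩

theorem Glt.trans (huv : Glt u v) (hvw : Glt v w) : Glt u w := by
  rcases huv with huv | ⟨huv, -, l, hl⟩ <;> rcases hvw with hvw | ⟨hvw, ⟨k, hk⟩, -⟩
  · exact .inl (huv.trans hvw)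
  · exact .inl (hvw ▸ huv)
  · exact .inl (huv ▸ hvw)
  · exact absurd (hl.symm.trans hk) Sum.inr_ne_inl

instance : IsTrans (List D × (P ⊕ O)) Glt := ⟨fun _ _ _ => Glt.trans⟩

theorem Glt.depth_lt (h : Glt u v) : depth u < depth v := by
  obtain ⟨x, a⟩ := u
  obtain ⟨y, b⟩ := v
  rcases h with h | ⟨rfl, ⟨k, rfl⟩, l, rfl⟩
  · have length_lt : x.length < y.length := h.length_lt
    cases a <;> cases b <;> simp only [depth, Sum.elim_inl, Sum.elim_inr] <;> omega
  · simp [depth]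

theorem Edge.glt (h : Edge eP eO u v) : Glt u v := by
  rcases h with ⟨x, k, l, rfl, rfl, -⟩ | ⟨x, l, d, k, rfl, rfl, -⟩
  · exact .inr ⟨rfl, ⟨k, rfl⟩, l, rfl⟩
  · exact .inl ⟨x.prefix_append _, by simp⟩

theorem Edge.depth_eq (h : Edge eP eO u v) : depth v = depth u + 1 := by
  rcases h with ⟨x, k, l, rfl, rfl, -⟩ | ⟨x, l, d, k, rfl, rfl, -⟩
  · simp [depth]
  · simp [depth, mul_add]

theorem glt_chain_iff (h : ∀ n, Edge eP eO (t n) (t (n + 1))) {i j : ℕ} :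
    Glt (t i) (t j) ↔ i < j := by
  refine ⟨fun hij => ?_, fun hij => Nat.rel_of_forall_rel_succ_of_lt Glt (fun n => (h n).glt) hij⟩
  have depth_chain := grade_chain (r := Edge eP eO) (fun _ _ he => he.depth_eq) h
  have depth_lt := hij.depth_lt
  rwa [depth_chain i, depth_chain j, Nat.add_lt_add_iff_left] at depth_lt

theorem edge_inl_iff {σ : List D × P → O} {x : List D} {k : P} :
    Edge (fun y => {σ y}) eO (x, .inl k) u ↔ u = (x, .inr (σ (x, k))) := by
  simp [Edge]

theorem edge_inr_iff {x : List D} {l : O} :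
    Edge eP eO (x, .inr l) u ↔ ∃ a ∈ eO (x, l), u = (x ++ [a.1], .inl a.2) := by
  simp [Edge, and_comm]

end GamePositions

section AcceptanceGame

variable {Alph Q : Type*}

/-- The acceptance game with a round, that is a Proponent move followed by an Opponent move,
contracted into one step: positions are pairs of a node and a state, moves are conjunctions. -/
def acceptanceArena (δ : Q × Alph → Set (Set (D × Q))) (F : List D → Alph) :
    Arena (List D × Q) (D × Q) where
  moves v := δ (v.2, F v.1)
  succ v a := (v.1 ++ [a.1], a.2)

/-- The play of the acceptance game that visits `s n` after `2 * n` moves if Proponent uses `σ`. -/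
def interleave (σ : List D × Q → Q × Set (D × Q)) (s : ℕ → List D × Q) (n : ℕ) :
    List D × (Q ⊕ Q × Set (D × Q)) :=
  ((s (n / 2)).1, if Even n then .inl (s (n / 2)).2 else .inr (σ (s (n / 2))))

variable {δ : Q × Alph → Set (Set (D × Q))} {c : Q → ℕ} {F : List D → Alph}
  {σ : List D × Q → Q × Set (D × Q)} {s : ℕ → List D × Q}
  {t : ℕ → List D × (Q ⊕ Q × Set (D × Q))}

theorem interleave_two_mul (n : ℕ) : interleave σ s (2 * n) = ((s n).1, .inl (s n).2) := by
  simp [interleave]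

theorem interleave_two_mul_add_one (n : ℕ) :
    interleave σ s (2 * n + 1) = ((s n).1, .inr (σ (s n))) := by
  have : (2 * n + 1) / 2 = n := by omega
  simp [interleave, this]

theorem hatC_comp_interleave (hσ : ∀ v, (σ v).1 = v.2) :
    HatC c ∘ interleave σ s = ((c ∘ Prod.snd) ∘ s) ∘ (· / 2) := by
  funext n
  by_cases hn : Even n <;> simp [HatC, interleave, hn, hσ]

theorem edge_interleave (hs : (acceptanceArena δ F).Follows (fun v => (σ v).2) s) (n : ℕ) :
    Edge (fun v => {σ v}) AccEO (interleave σ s n) (interleave σ s (n + 1)) := by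
  rcases n.even_or_odd' with ⟨m, rfl | rfl⟩
  · rw [interleave_two_mul, interleave_two_mul_add_one, edge_inl_iff]
  · obtain ⟨a, ha, hsucc⟩ := hs m
    rw [show 2 * m + 1 + 1 = 2 * (m + 1) by ring, interleave_two_mul_add_one,
      interleave_two_mul, edge_inr_iff, hsucc]
    exact ⟨a, ha, rfl⟩

theorem exists_eq_interleave {v₀ : List D × Q}
    (ht : ∀ n, Edge (fun v => {σ v}) AccEO (t n) (t (n + 1))) (ht₀ : t 0 = (v₀.1, .inl v₀.2)) :
    ∃ s, s 0 = v₀ ∧ (acceptanceArena δ F).Follows (fun v => (σ v).2) s ∧ t = interleave σ s := by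
  let toPos (v : List D × Q) : List D × (Q ⊕ Q × Set (D × Q)) := (v.1, .inl v.2)
  have toPos_injective : Function.Injective toPos := fun v w h => by
    simpa [toPos, Prod.ext_iff] using h
  have opponent_turn {n v} (hv : t (2 * n) = toPos v) : t (2 * n + 1) = (v.1, .inr (σ v)) :=
    edge_inl_iff.mp (hv ▸ ht (2 * n))
  have round {n v} (hv : t (2 * n) = toPos v) :
      ∃ a ∈ (σ v).2, t (2 * (n + 1)) = toPos ((acceptanceArena δ F).succ v a) :=
    edge_inr_iff.mp (opponent_turn hv ▸ ht (2 * n + 1))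
  have proponent_turn (n) : ∃ v, t (2 * n) = toPos v := by
    induction n with
    | zero => exact ⟨v₀, ht₀⟩
    | succ n ih =>
      obtain ⟨v, hv⟩ := ih
      exact (round hv).imp' _ fun a ha => ha.2
  choose s hs using proponent_turn
  refine ⟨s, toPos_injective ((hs 0).symm.trans ht₀), fun n => ?_, funext fun n => ?_⟩
  · obtain ⟨a, ha, hsucc⟩ := round (hs n)
    exact ⟨a, ha, toPos_injective ((hs (n + 1)).symm.trans hsucc)⟩
  · rcases n.even_or_odd' with ⟨m, rfl | rfl⟩
    · rw [hs, interleave_two_mul]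
    · rw [opponent_turn (hs m), interleave_two_mul_add_one]

theorem par_range_iff {eP : List D × Q → Set (Q × Set (D × Q))}
    {eO : List D × (Q × Set (D × Q)) → Set (D × Q)} (h : ∀ n, Edge eP eO (t n) (t (n + 1))) :
    Par c (Set.range t) ↔ LiminfSatisfies Even (HatC c ∘ t) := by
  simp only [Par, LiminfSatisfies, Set.forall_mem_range, Set.exists_range_iff, glt_chain_iff h,
    Filter.frequently_atTop', Filter.atTop_basis_Ioi.eventually_iff, Set.mem_Ioi, true_and,
    gt_iff_lt, Function.comp_apply]

theorem par_interleave_iff (hσ : ∀ v, (σ v).1 = v.2)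
    (hs : (acceptanceArena δ F).Follows (fun v => (σ v).2) s) :
    Par c (Set.range (interleave σ s)) ↔ LiminfSatisfies Even ((c ∘ Prod.snd) ∘ s) := by
  rw [par_range_iff (edge_interleave hs), hatC_comp_interleave hσ,
    liminfSatisfies_comp_iff (Filter.map_div_atTop_eq_nat 2 two_pos)]

theorem forall_isPlay_par_iff (hσ : ∀ v, (σ v).1 = v.2) (q₀ : Q) :
    (∀ U, IsPlay (Edge (fun v => {σ v}) AccEO) (([] : List D), Sum.inl q₀) U → Par c U) ↔
      ∀ s : ℕ → List D × Q, s 0 = ([], q₀) →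
        (acceptanceArena δ F).Follows (fun v => (σ v).2) s →
        LiminfSatisfies Even ((c ∘ Prod.snd) ∘ s) := by
  constructor
  · intro h s hs₀ hs
    have hplay := isPlay_range (edge_interleave hs)
    rw [show interleave σ s 0 = ([], .inl q₀) by simp [interleave, hs₀]] at hplay
    exact (par_interleave_iff hσ hs).mp (h _ hplay)
  · intro h U hU
    obtain ⟨t, ht₀, ht, rfl⟩ := hU.exists_eq_range fun _ _ h => Edge.depth_eq h
    obtain ⟨s, hs₀, hs, rfl⟩ := exists_eq_interleave (δ := δ) (F := F) (v₀ := ([], q₀)) ht ht₀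
    exact (par_interleave_iff hσ hs).mpr (h s hs₀ hs)

theorem accepts_iff_wins {q₀ : Q} :
    Accepts δ c q₀ F ↔ (acceptanceArena δ F).Wins (c ∘ Prod.snd) Even ([], q₀) := by
  constructor
  · rintro ⟨σ, hσ, hwin⟩
    exact ⟨fun v => (σ v).2, fun v => (hσ v).2,
      (forall_isPlay_par_iff (fun v => (hσ v).1) q₀).mp hwin⟩
  · rintro ⟨τ, hτ, hwin⟩
    exact ⟨fun v => (v.2, τ v), fun v => ⟨rfl, hτ v⟩,
      (forall_isPlay_par_iff (fun _ => rfl) q₀).mpr hwin⟩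

/-- The transition function of the complement automaton. -/
def dualTransitions (δ : Q × Alph → Set (Set (D × Q))) (p : Q × Alph) : Set (Set (D × Q)) :=
  {Cb | Cb.Nonempty ∧ ∀ C ∈ δ p, (Cb ∩ C).Nonempty}

theorem acceptanceArena_dualTransitions (hδ : ∀ p, (δ p).Nonempty) :
    acceptanceArena (dualTransitions δ) F = (acceptanceArena δ F).dual := by
  have moves_eq (p) : dualTransitions δ p = {T | ∀ C ∈ δ p, (T ∩ C).Nonempty} := by
    ext T
    refine ⟨And.right, fun hT => ⟨?_, hT⟩⟩
    obtain ⟨C, hC⟩ := hδ p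
    exact (hT C hC).mono Set.inter_subset_left
  simp only [acceptanceArena, Arena.dual, moves_eq]

end AcceptanceGame

theorem complementation_general {Alph Q : Type*} (δ : Q × Alph → Set (Set (D × Q))) (c : Q → ℕ)
    (hc : BddAbove (Set.range c)) (q₀ : Q) (hA : AutWF δ) (F : List D → Alph) :
    Accepts (dualTransitions δ) (fun q => c q + 1) q₀ F ↔ ¬ Accepts δ c q₀ F := by
  have hc' : BddAbove (Set.range (c ∘ Prod.snd : List D × Q → ℕ)) :=
    hc.mono (Set.range_comp_subset_range _ _)
  calc Accepts (dualTransitions δ) (fun q => c q + 1) q₀ F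
      ↔ (acceptanceArena (dualTransitions δ) F).Wins (fun v => c v.2 + 1) Even ([], q₀) :=
        accepts_iff_wins
    _ ↔ (acceptanceArena δ F).dual.Wins (c ∘ Prod.snd) (fun m => ¬ Even m) ([], q₀) := by
        rw [acceptanceArena_dualTransitions fun p => (hA p.1 p.2).1]
        exact Arena.wins_even_add_one_iff
    _ ↔ ¬ (acceptanceArena δ F).Wins (c ∘ Prod.snd) Even ([], q₀) :=
        Arena.wins_dual_iff_not_wins (fun _ => (hA _ _).1) (fun _ => (hA _ _).2) hc' _
    _ ↔ ¬ Accepts δ c q₀ F := accepts_iff_wins.not.symm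

theorem complementation {Alph Q : Type*} [Fintype D] [Nonempty D]
    [Fintype Alph] [Nonempty Alph] [Fintype Q] [Nonempty Q]
    (δ : Q × Alph → Set (Set (D × Q))) (c : Q → ℕ) (q₀ : Q)
    (hA : AutWF δ) (F : List D → Alph) :
    Accepts
      (fun p => {Cb : Set (D × Q) | Cb.Nonempty ∧ ∀ C ∈ δ p, (Cb ∩ C).Nonempty})
      (fun q => c q + 1) q₀ F ↔ ¬ Accepts δ c q₀ F :=
  complementation_general δ c (Set.finite_range c).bddAbove q₀ hA F

end TreeGames
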